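/- Let N ≥ 1, α, β ≥ 1, A, B ≥ 0 with min{A,B} ≥ 1, and let 1 ≤ σ ≤ min{A,B}. Then there exists a positive constant γ₂, depending only on N, α, β, A, B, σ, with the following property: for every nonnegative measurable function w₀ on ℝ^N with w₀ ∈ L^σ_loc(ℝ^N) and S(t)w₀^σ ∈ L^∞(ℝ^N) for all t > 0, if sup_{0<t≤T} [ ‖S(t)w₀^σ‖_{L^∞(ℝ^N)}^{1−1/σ} · ∫₀ᵗ ( ‖S(s)w₀^σ‖_{L^∞(ℝ^N)}^{A/σ − 1} + ‖S(s)w₀^σ‖_{L^∞(ℝ^N)}^{B/σ − 1} ) ds ] ≤ γ₂ for some T > 0, then the scalar problem (E) with initial data w₀ possesses a solution w on ℝ^N × (0,T] satisfying 0 ≤ w(x,t) ≤ 2 [S(t)w₀^σ](x)^{1/σ} for a.e. x ∈ ℝ^N and all t ∈ (0,T]. -/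

import Mathlib

open MeasureTheory ENNReal Filter

noncomputable section

/-- Euclidean space `ℝ^N`. -/
abbrev Euc (N : ℕ) := EuclideanSpace ℝ (Fin N)

/-- The heat semigroup applied to a (nonnegative) function `φ` on `ℝ^N`, with values in `[0,∞]`:
`[S(t)φ](x) = ∫ (4πt)^{-N/2} exp(-|x-y|²/(4t)) φ(y) dy`. -/
noncomputable def heatS (N : ℕ) (t : ℝ) (φ : Euc N → ℝ) (x : Euc N) : ℝ≥0∞ :=
  ∫⁻ y, ENNReal.ofReal
    ((4 * Real.pi * t) ^ (-(N : ℝ) / 2) * Real.exp (-‖x - y‖ ^ 2 / (4 * t)) * φ y)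

/-- The `L^∞` norm of `S(t)φ` on `ℝ^N`. -/
noncomputable def heatSup (N : ℕ) (t : ℝ) (φ : Euc N → ℝ) : ℝ≥0∞ :=
  essSup (heatS N t φ) volume

/-- The `L^{r,∞}(E)` quasinorm: for `1 < r < ∞` it is
`sup_{λ>0} λ |{x ∈ E : |f x| > λ}|^{1/r}`; for `r = 1` (resp. `r = ∞`)
it is the usual `L¹(E)` (resp. `L^∞(E)`) norm. -/
noncomputable def wnorm (N : ℕ) (r : ℝ≥0∞) (f : Euc N → ℝ) (E : Set (Euc N)) : ℝ≥0∞ :=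
  if r = 1 then ∫⁻ x in E, ENNReal.ofReal |f x|
  else if r = ⊤ then essSup (fun x => ENNReal.ofReal |f x|) (volume.restrict E)
  else ⨆ (l : ℝ) (_ : 0 < l), ENNReal.ofReal l * (volume {x ∈ E | l < |f x|}) ^ (1 / r.toReal)

/-- The uniformly local quasinorm `|||f|||_{r,ρ} = sup_x ‖f‖_{L^{r,∞}(B(x,ρ))}`
(for `r = ∞` it is the `L^∞(ℝ^N)` norm). -/
noncomputable def ulocNorm (N : ℕ) (r : ℝ≥0∞) (ρ : ℝ) (f : Euc N → ℝ) : ℝ≥0∞ :=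
  if r = ⊤ then essSup (fun x => ENNReal.ofReal |f x|) volume
  else ⨆ x : Euc N, wnorm N r f (Metric.ball x ρ)

/-- `u ∈ L^∞(τ, T-τ; L^∞(ℝ^N))` for every `τ ∈ (0, T/2)`. -/
def LocBdd (N : ℕ) (T : ℝ≥0∞) (u : Euc N → ℝ → ℝ) : Prop :=
  ∀ τ : ℝ, 0 < τ → ENNReal.ofReal (2 * τ) < T →
    ∃ M : ℝ, ∀ t : ℝ, τ ≤ t → ENNReal.ofReal (t + τ) ≤ T →
      ∀ᵐ x ∂(volume : Measure (Euc N)), |u x t| ≤ M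

/-- Regularity requirements on a pair `(u,v)`: nonnegativity, joint measurability and
uniform boundedness away from `t = 0` and `t = T`. -/
def PairRegular (N : ℕ) (T : ℝ≥0∞) (u v : Euc N → ℝ → ℝ) : Prop :=
  (∀ x t, 0 ≤ u x t) ∧ (∀ x t, 0 ≤ v x t) ∧
  Measurable (Function.uncurry u) ∧ Measurable (Function.uncurry v) ∧
  LocBdd N T u ∧ LocBdd N T v

/-- The Duhamel identities for the system (S) `∂ₜu = Δu + v^p`, `∂ₜv = Δv + u^q` at time `t`. -/
def DuhamelSys (N : ℕ) (p q : ℝ) (u₀ v₀ : Euc N → ℝ) (u v : Euc N → ℝ → ℝ) (t : ℝ) : Prop :=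
  (∀ᵐ x ∂(volume : Measure (Euc N)), ENNReal.ofReal (u x t) =
      heatS N t u₀ x + ∫⁻ s in Set.Ioo 0 t, heatS N (t - s) (fun y => v y s ^ p) x) ∧
  (∀ᵐ x ∂(volume : Measure (Euc N)), ENNReal.ofReal (v x t) =
      heatS N t v₀ x + ∫⁻ s in Set.Ioo 0 t, heatS N (t - s) (fun y => u y s ^ q) x)

/-- The Duhamel inequalities (`≥`, with finite left-hand side) for the system (S) at time `t`. -/
def DuhamelSuperSys (N : ℕ) (p q : ℝ) (u₀ v₀ : Euc N → ℝ) (u v : Euc N → ℝ → ℝ) (t : ℝ) : Prop :=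
  (∀ᵐ x ∂(volume : Measure (Euc N)),
      heatS N t u₀ x + (∫⁻ s in Set.Ioo 0 t, heatS N (t - s) (fun y => v y s ^ p) x) ≤
        ENNReal.ofReal (u x t)) ∧
  (∀ᵐ x ∂(volume : Measure (Euc N)),
      heatS N t v₀ x + (∫⁻ s in Set.Ioo 0 t, heatS N (t - s) (fun y => u y s ^ q) x) ≤
        ENNReal.ofReal (v x t))

/-- `(u,v)` is a solution of the system (S) on `ℝ^N × (0,T)`. -/
def IsSolSys (N : ℕ) (p q : ℝ) (u₀ v₀ : Euc N → ℝ) (T : ℝ≥0∞) (u v : Euc N → ℝ → ℝ) : Prop :=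
  PairRegular N T u v ∧
  ∀ t : ℝ, 0 < t → ENNReal.ofReal t < T → DuhamelSys N p q u₀ v₀ u v t

/-- `(u,v)` is a supersolution of the system (S) on `ℝ^N × (0,T)`. -/
def IsSuperSys (N : ℕ) (p q : ℝ) (u₀ v₀ : Euc N → ℝ) (T : ℝ≥0∞) (u v : Euc N → ℝ → ℝ) : Prop :=
  PairRegular N T u v ∧
  ∀ t : ℝ, 0 < t → ENNReal.ofReal t < T → DuhamelSuperSys N p q u₀ v₀ u v t

/-- `(u,v)` is the minimal solution of the system (S) on `ℝ^N × (0,T)`. -/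
def IsMinSolSys (N : ℕ) (p q : ℝ) (u₀ v₀ : Euc N → ℝ) (T : ℝ≥0∞)
    (u v : Euc N → ℝ → ℝ) : Prop :=
  IsSolSys N p q u₀ v₀ T u v ∧
  ∀ u' v' : Euc N → ℝ → ℝ, IsSolSys N p q u₀ v₀ T u' v' →
    ∀ t : ℝ, 0 < t → ENNReal.ofReal t < T →
      (∀ᵐ x ∂(volume : Measure (Euc N)), u x t ≤ u' x t) ∧
      (∀ᵐ x ∂(volume : Measure (Euc N)), v x t ≤ v' x t)

/-- Regularity requirements on a scalar function `w`. -/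
def ScalarRegular (N : ℕ) (T : ℝ≥0∞) (w : Euc N → ℝ → ℝ) : Prop :=
  (∀ x t, 0 ≤ w x t) ∧ Measurable (Function.uncurry w) ∧ LocBdd N T w

/-- The Duhamel identity for the scalar problem (E) `∂ₜw = Δw + α w^A + β w^B` at time `t`. -/
def DuhamelScalar (N : ℕ) (α β A B : ℝ) (w₀ : Euc N → ℝ) (w : Euc N → ℝ → ℝ) (t : ℝ) : Prop :=
  ∀ᵐ x ∂(volume : Measure (Euc N)), ENNReal.ofReal (w x t) =
    heatS N t w₀ x +
      ∫⁻ s in Set.Ioo 0 t, heatS N (t - s) (fun y => α * w y s ^ A + β * w y s ^ B) x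

/-- The Duhamel inequality (`≥`, with finite left-hand side) for the scalar problem (E). -/
def DuhamelSuperScalar (N : ℕ) (α β A B : ℝ) (w₀ : Euc N → ℝ) (w : Euc N → ℝ → ℝ)
    (t : ℝ) : Prop :=
  ∀ᵐ x ∂(volume : Measure (Euc N)),
    heatS N t w₀ x +
        (∫⁻ s in Set.Ioo 0 t, heatS N (t - s) (fun y => α * w y s ^ A + β * w y s ^ B) x) ≤
      ENNReal.ofReal (w x t)

/-- `w` is a solution of the scalar problem (E) on `ℝ^N × (0,T)`. -/
def IsSolScalar (N : ℕ) (α β A B : ℝ) (w₀ : Euc N → ℝ) (T : ℝ≥0∞)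
    (w : Euc N → ℝ → ℝ) : Prop :=
  ScalarRegular N T w ∧
  ∀ t : ℝ, 0 < t → ENNReal.ofReal t < T → DuhamelScalar N α β A B w₀ w t

/-- `w` is a supersolution of the scalar problem (E) on `ℝ^N × (0,T)`. -/
def IsSuperScalar (N : ℕ) (α β A B : ℝ) (w₀ : Euc N → ℝ) (T : ℝ≥0∞)
    (w : Euc N → ℝ → ℝ) : Prop :=
  ScalarRegular N T w ∧
  ∀ t : ℝ, 0 < t → ENNReal.ofReal t < T → DuhamelSuperScalar N α β A B w₀ w t

/-- The Duhamel identities for the strongly coupled system (SC)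
`∂ₜu = Δu + u^{p₁} v^{p₂}`, `∂ₜv = Δv + u^{q₁} v^{q₂}` at time `t`. -/
def DuhamelSC (N : ℕ) (p₁ p₂ q₁ q₂ : ℝ) (u₀ v₀ : Euc N → ℝ) (u v : Euc N → ℝ → ℝ)
    (t : ℝ) : Prop :=
  (∀ᵐ x ∂(volume : Measure (Euc N)), ENNReal.ofReal (u x t) =
      heatS N t u₀ x +
        ∫⁻ s in Set.Ioo 0 t, heatS N (t - s) (fun y => u y s ^ p₁ * v y s ^ p₂) x) ∧
  (∀ᵐ x ∂(volume : Measure (Euc N)), ENNReal.ofReal (v x t) =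
      heatS N t v₀ x +
        ∫⁻ s in Set.Ioo 0 t, heatS N (t - s) (fun y => u y s ^ q₁ * v y s ^ q₂) x)

/-- `(u,v)` is a solution of the strongly coupled system (SC) on `ℝ^N × (0,T)`. -/
def IsSolSC (N : ℕ) (p₁ p₂ q₁ q₂ : ℝ) (u₀ v₀ : Euc N → ℝ) (T : ℝ≥0∞)
    (u v : Euc N → ℝ → ℝ) : Prop :=
  PairRegular N T u v ∧
  ∀ t : ℝ, 0 < t → ENNReal.ofReal t < T → DuhamelSC N p₁ p₂ q₁ q₂ u₀ v₀ u v t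

/-- The heat kernel with values in `[0,∞]`. -/
def hK (N : ℕ) (t : ℝ) (z : Euc N) : ℝ≥0∞ :=
  ENNReal.ofReal ((4 * Real.pi * t) ^ (-(N : ℝ) / 2) * Real.exp (-‖z‖ ^ 2 / (4 * t)))

/-- The heat semigroup on `[0,∞]`-valued functions. -/
def hS (N : ℕ) (t : ℝ) (f : Euc N → ℝ≥0∞) (x : Euc N) : ℝ≥0∞ :=
  ∫⁻ y, hK N t (x - y) * f y

lemma hK_meas (N : ℕ) : Measurable (fun p : ℝ × Euc N => hK N p.1 p.2) := by
  unfold hK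
  fun_prop

lemma heatS_eq (N : ℕ) {t : ℝ} (ht : 0 < t) (φ : Euc N → ℝ) (x : Euc N) :
    heatS N t φ x = hS N t (fun y => ENNReal.ofReal (φ y)) x := by
  unfold heatS hS hK
  refine lintegral_congr fun y => ?_
  rw [ENNReal.ofReal_mul]
  positivity

lemma gauss_lint (N : ℕ) {b : ℝ} (hb : 0 < b) (c : Euc N) :
    ∫⁻ z : Euc N, ENNReal.ofReal (Real.exp (-b * ‖z - c‖ ^ 2)) =
      ENNReal.ofReal ((Real.pi / b) ^ ((N : ℝ) / 2)) := by
  rw [lintegral_sub_right_eq_self (fun z : Euc N => ENNReal.ofReal (Real.exp (-b * ‖z‖ ^ 2))) c]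
  have h := GaussianFourier.integral_rexp_neg_mul_sq_norm (V := Euc N) hb
  have hpos : 0 < (Real.pi / b) ^ ((N : ℝ) / 2) := by positivity
  rw [finrank_euclideanSpace, Fintype.card_fin] at h
  rw [← ofReal_integral_eq_lintegral_ofReal, h]
  · by_contra hni
    rw [integral_undef hni] at h
    linarith
  · exact Eventually.of_forall fun z => (Real.exp_pos _).le

lemma hK_one (N : ℕ) {t : ℝ} (ht : 0 < t) (x : Euc N) : ∫⁻ y, hK N t (x - y) = 1 := by
  have hc : 0 ≤ (4 * Real.pi * t) ^ (-(N : ℝ) / 2) := by positivity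
  have h : ∀ y : Euc N, hK N t (x - y) = ENNReal.ofReal ((4 * Real.pi * t) ^ (-(N : ℝ) / 2)) *
      ENNReal.ofReal (Real.exp (-(1 / (4 * t)) * ‖y - x‖ ^ 2)) := by
    intro y
    rw [← ENNReal.ofReal_mul hc, hK, norm_sub_rev x y]
    congr 3
    ring
  simp_rw [h]
  rw [lintegral_const_mul' _ _ ENNReal.ofReal_ne_top, gauss_lint N (by positivity),
    ← ENNReal.ofReal_mul hc]
  have : Real.pi / (1 / (4 * t)) = 4 * Real.pi * t := by field_simp
  rw [this, ← Real.rpow_add (by positivity)]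
  have : -(N : ℝ) / 2 + N / 2 = 0 := by ring
  simp [this]

lemma sq_id {N : ℕ} {a b : ℝ} (ha : 0 < a) (hb : 0 < b) (x y z : Euc N) :
    -‖x - z‖ ^ 2 / (4 * a) + -‖z - y‖ ^ 2 / (4 * b) =
      -‖x - y‖ ^ 2 / (4 * (a + b)) +
        -((a + b) / (4 * a * b)) * ‖z - ((b / (a + b)) • x + (a / (a + b)) • y)‖ ^ 2 := by
  have hab : 0 < a + b := by positivity
  have e1 : z - ((b / (a + b)) • x + (a / (a + b)) • y) =
      (a / (a + b)) • (z - y) - (b / (a + b)) • (x - z) := by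
    have : z = (a / (a + b)) • z + (b / (a + b)) • z := by
      rw [← add_smul, ← add_div, div_self hab.ne', one_smul]
    nth_rewrite 1 [this]
    module
  have e2 : x - y = (x - z) + (z - y) := by abel
  rw [e1, e2]
  generalize x - z = p
  generalize z - y = q
  rw [norm_add_sq_real, norm_sub_sq_real, norm_smul, norm_smul, inner_smul_left, inner_smul_right,
    real_inner_comm]
  simp only [Real.norm_eq_abs, mul_pow, sq_abs, conj_trivial]
  field_simp
  ring

lemma hK_semi (N : ℕ) {a b : ℝ} (ha : 0 < a) (hb : 0 < b) (x y : Euc N) :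
    ∫⁻ z, hK N a (x - z) * hK N b (z - y) = hK N (a + b) (x - y) := by
  have hab : 0 < a + b := by positivity
  have h : ∀ z : Euc N, hK N a (x - z) * hK N b (z - y) =
      ENNReal.ofReal ((4 * Real.pi * a) ^ (-(N : ℝ) / 2) * (4 * Real.pi * b) ^ (-(N : ℝ) / 2) *
        Real.exp (-‖x - y‖ ^ 2 / (4 * (a + b)))) *
      ENNReal.ofReal (Real.exp (-((a + b) / (4 * a * b)) *
        ‖z - ((b / (a + b)) • x + (a / (a + b)) • y)‖ ^ 2)) := by
    intro z
    rw [hK, hK, ← ENNReal.ofReal_mul (by positivity), ← ENNReal.ofReal_mul (by positivity)]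
    congr 1
    have := congrArg Real.exp (sq_id ha hb x y z)
    rw [Real.exp_add, Real.exp_add] at this
    rw [mul_assoc (_ * _) (Real.exp _), ← this]
    ring
  simp_rw [h]
  rw [lintegral_const_mul' _ _ ENNReal.ofReal_ne_top, gauss_lint N (by positivity),
    ← ENNReal.ofReal_mul (by positivity), hK]
  congr 1
  rw [mul_right_comm]
  congr 1
  have hn : ∀ r : ℝ, -(N : ℝ) / 2 = -((N : ℝ) / 2) := fun _ => by ring
  rw [hn 0, Real.rpow_neg (by positivity), Real.rpow_neg (by positivity),
    Real.rpow_neg (by positivity), ← mul_inv, ← Real.mul_rpow (by positivity) (by positivity),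
    ← Real.inv_rpow (by positivity), ← Real.inv_rpow (by positivity),
    ← Real.mul_rpow (by positivity) (by positivity)]
  congr 1
  have := Real.pi_pos
  field_simp
  try ring

lemma hS_meas (N : ℕ) {f : Euc N → ℝ → ℝ≥0∞} (hf : Measurable (Function.uncurry f)) :
    Measurable (fun p : (Euc N × ℝ) × ℝ => hS N p.2 (fun y => f y p.1.2) p.1.1) := by
  unfold hS
  refine Measurable.lintegral_prod_right' (ν := volume)
    (f := fun q : ((Euc N × ℝ) × ℝ) × Euc N => hK N q.1.2 (q.1.1.1 - q.2) * f q.2 q.1.1.2) ?_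
  refine Measurable.mul ?_ ?_
  · exact (hK_meas N).comp (f := fun q : ((Euc N × ℝ) × ℝ) × Euc N => (q.1.2, q.1.1.1 - q.2))
      (by fun_prop)
  · exact hf.comp (f := fun q : ((Euc N × ℝ) × ℝ) × Euc N => (q.2, q.1.1.2)) (by fun_prop)

lemma hS_meas_x (N : ℕ) {f : Euc N → ℝ≥0∞} (hf : Measurable f) :
    Measurable (fun p : Euc N × ℝ => hS N p.2 f p.1) := by
  have := hS_meas N (f := fun y _ => f y) (hf.comp measurable_fst)
  exact this.comp (f := fun p : Euc N × ℝ => ((p.1, (0 : ℝ)), p.2)) (by fun_prop)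

lemma hS_semi (N : ℕ) {a b : ℝ} (ha : 0 < a) (hb : 0 < b) {f : Euc N → ℝ≥0∞} (hf : Measurable f)
    (x : Euc N) : hS N a (hS N b f) x = hS N (a + b) f x := by
  have hm : ∀ t, Measurable (hK N t) := fun t => (hK_meas N).comp (f := fun z => (t, z)) (by fun_prop)
  have m1 : Measurable (fun p : Euc N × Euc N => hK N a (x - p.1) * (hK N b (p.1 - p.2) * f p.2)) :=
    ((hm a).comp (by fun_prop)).mul (((hm b).comp (by fun_prop)).mul (hf.comp measurable_snd))
  calc hS N a (hS N b f) x
      = ∫⁻ z, ∫⁻ y, hK N a (x - z) * (hK N b (z - y) * f y) := by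
        unfold hS
        refine lintegral_congr fun z => ?_
        exact (lintegral_const_mul' _ _ ENNReal.ofReal_ne_top).symm
    _ = ∫⁻ y, ∫⁻ z, hK N a (x - z) * (hK N b (z - y) * f y) :=
        lintegral_lintegral_swap m1.aemeasurable
    _ = hS N (a + b) f x := by
        unfold hS
        refine lintegral_congr fun y => ?_
        rw [← hK_semi N ha hb x y, ← lintegral_mul_const]
        · simp_rw [mul_assoc]
        · exact ((hm a).comp (by fun_prop)).mul ((hm b).comp (by fun_prop))

lemma hS_jensen (N : ℕ) {t : ℝ} (ht : 0 < t) {σ : ℝ} (hσ : 1 ≤ σ) {f : Euc N → ℝ≥0∞}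
    (hf : Measurable f) (x : Euc N) :
    hS N t f x ≤ hS N t (fun y => f y ^ σ) x ^ (1 / σ) := by
  have hm : Measurable (fun y => hK N t (x - y)) :=
    (hK_meas N).comp (f := fun z => (t, x - z)) (by fun_prop)
  have hp : IsProbabilityMeasure ((volume : Measure (Euc N)).withDensity fun y => hK N t (x - y)) :=
    ⟨by rw [withDensity_apply _ MeasurableSet.univ, Measure.restrict_univ, hK_one N ht]⟩
  have h := eLpNorm'_le_eLpNorm'_of_exponent_le (f := f) zero_lt_one hσ
    ((volume : Measure (Euc N)).withDensity fun y => hK N t (x - y))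
  simp only [eLpNorm', enorm_eq_self, ENNReal.rpow_one, div_one] at h
  rw [lintegral_withDensity_eq_lintegral_mul _ hm hf,
    lintegral_withDensity_eq_lintegral_mul _ hm (hf.pow_const σ)] at h
  exact h hf.aestronglyMeasurable

lemma hS_mono (N : ℕ) {t : ℝ} {f g : Euc N → ℝ≥0∞} (h : f ≤ᵐ[volume] g) (x : Euc N) :
    hS N t f x ≤ hS N t g x :=
  lintegral_mono_ae (h.mono fun _ hy => mul_le_mul_right hy _)

lemma hS_const (N : ℕ) {t : ℝ} {f : Euc N → ℝ≥0∞} (hf : Measurable f) (c : ℝ≥0∞) (x : Euc N) :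
    hS N t (fun y => c * f y) x = c * hS N t f x := by
  unfold hS
  have hm : Measurable (fun y => hK N t (x - y)) :=
    (hK_meas N).comp (f := fun z => (t, x - z)) (by fun_prop)
  refine Eq.trans ?_ (lintegral_const_mul c (hm.mul hf))
  exact lintegral_congr fun y => by simp only [Pi.mul_apply]; ring

/-- The Picard operator on `[0,∞]`-valued functions. -/
def Pic (N : ℕ) (F : ℝ≥0∞ → ℝ≥0∞) (f : Euc N → ℝ≥0∞) (W : Euc N → ℝ → ℝ≥0∞)
    (x : Euc N) (t : ℝ) : ℝ≥0∞ :=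
  hS N t f x + ∫⁻ s in Set.Ioo 0 t, hS N (t - s) (fun y => F (W y s)) x

lemma duh_meas (N : ℕ) {G : Euc N → ℝ → ℝ≥0∞} (hG : Measurable (Function.uncurry G)) :
    Measurable (fun q : (Euc N × ℝ) × ℝ => hS N (q.1.2 - q.2) (fun y => G y q.2) q.1.1) :=
  (hS_meas N hG).comp (f := fun q : (Euc N × ℝ) × ℝ => ((q.1.1, q.2), q.1.2 - q.2)) (by fun_prop)

lemma Pic_meas (N : ℕ) {F : ℝ≥0∞ → ℝ≥0∞} (hF : Measurable F) {f : Euc N → ℝ≥0∞}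
    (hf : Measurable f) {W : Euc N → ℝ → ℝ≥0∞} (hW : Measurable (Function.uncurry W)) :
    Measurable (Function.uncurry (Pic N F f W)) := by
  refine (hS_meas_x N hf).add ?_
  have h := duh_meas N (G := fun y s => F (W y s)) (hF.comp hW)
  have hs : MeasurableSet {q : (Euc N × ℝ) × ℝ | q.2 ∈ Set.Ioo 0 q.1.2} :=
    (measurableSet_lt measurable_const measurable_snd).inter
      (measurableSet_lt measurable_snd (by fun_prop))
  have := (h.indicator hs).lintegral_prod_right' (ν := volume)
  refine Eq.mp (congrArg Measurable ?_) this
  funext p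
  exact lintegral_indicator (measurableSet_Ioo (a := (0 : ℝ)) (b := p.2))
    (fun s => hS N (p.2 - s) (fun y => F (W y s)) p.1)

/-- Picard iterates. -/
def Wit (N : ℕ) (F : ℝ≥0∞ → ℝ≥0∞) (f : Euc N → ℝ≥0∞) : ℕ → Euc N → ℝ → ℝ≥0∞
  | 0 => fun _ _ => 0
  | n + 1 => Pic N F f (Wit N F f n)

lemma Wit_meas (N : ℕ) {F : ℝ≥0∞ → ℝ≥0∞} (hF : Measurable F) {f : Euc N → ℝ≥0∞}
    (hf : Measurable f) (n : ℕ) : Measurable (Function.uncurry (Wit N F f n)) := by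
  induction n with
  | zero => exact measurable_const
  | succ n ih => exact Pic_meas N hF hf ih

lemma Pic_mono (N : ℕ) {F : ℝ≥0∞ → ℝ≥0∞} (hF : Monotone F) (f : Euc N → ℝ≥0∞)
    {V W : Euc N → ℝ → ℝ≥0∞} (h : V ≤ W) : Pic N F f V ≤ Pic N F f W := by
  intro x t
  refine add_le_add le_rfl (lintegral_mono fun s => ?_)
  exact hS_mono N (Eventually.of_forall fun y => hF (h y s)) x

lemma Wit_mono (N : ℕ) {F : ℝ≥0∞ → ℝ≥0∞} (hF : Monotone F) (f : Euc N → ℝ≥0∞) :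
    Monotone (Wit N F f) := by
  refine monotone_nat_of_le_succ fun n => ?_
  induction n with
  | zero => intro x t; exact zero_le
  | succ n ih => exact Pic_mono N hF f ih

/-- The limit of the Picard iterates. -/
def Wlim (N : ℕ) (F : ℝ≥0∞ → ℝ≥0∞) (f : Euc N → ℝ≥0∞) (x : Euc N) (t : ℝ) : ℝ≥0∞ :=
  ⨆ n, Wit N F f n x t

lemma Wlim_meas (N : ℕ) {F : ℝ≥0∞ → ℝ≥0∞} (hF : Measurable F) {f : Euc N → ℝ≥0∞}
    (hf : Measurable f) : Measurable (Function.uncurry (Wlim N F f)) := by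
  have : Measurable (fun p : Euc N × ℝ => ⨆ n, Function.uncurry (Wit N F f n) p) :=
    Measurable.iSup fun n => Wit_meas N hF hf n
  exact this

lemma Wlim_eq (N : ℕ) {F : ℝ≥0∞ → ℝ≥0∞} (hF : Monotone F) (hFc : Continuous F) {f : Euc N → ℝ≥0∞}
    (hf : Measurable f) (x : Euc N) (t : ℝ) : Wlim N F f x t = Pic N F f (Wlim N F f) x t := by
  have hmon : ∀ y s, Monotone fun n => Wit N F f n y s := fun y s m n h => Wit_mono N hF f h y s
  have hlim : ∀ y s, Tendsto (fun n => Wit N F f n y s) atTop (nhds (Wlim N F f y s)) :=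
    fun y s => tendsto_atTop_iSup (hmon y s)
  refine tendsto_nhds_unique ((hlim x t).comp (tendsto_add_atTop_nat 1)) ?_
  change Tendsto (fun n => Pic N F f (Wit N F f n) x t) atTop _
  refine Tendsto.add tendsto_const_nhds ?_
  have hm : ∀ t, Measurable (hK N t) := fun t => (hK_meas N).comp (f := fun z => (t, z)) (by fun_prop)
  have hWm := Wit_meas N hFc.measurable hf
  refine lintegral_tendsto_of_tendsto_of_monotone ?_ ?_ ?_
  · intro n
    have h := duh_meas N (G := fun y s => F (Wit N F f n y s)) (hFc.measurable.comp (hWm n))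
    exact (h.comp (f := fun s => ((x, t), s)) (by fun_prop)).aemeasurable
  · refine Eventually.of_forall fun s m n h => ?_
    exact hS_mono N (Eventually.of_forall fun y => hF (hmon y s h)) x
  · refine Eventually.of_forall fun s => ?_
    refine lintegral_tendsto_of_tendsto_of_monotone ?_ ?_ ?_
    · intro n
      refine (Measurable.mul ((hm _).comp (by fun_prop)) (hFc.measurable.comp ?_)).aemeasurable
      exact (hWm n).comp (f := fun y => (y, s)) (by fun_prop)
    · exact Eventually.of_forall fun y m n h => mul_le_mul_right (hF (hmon y s h)) _
    · refine Eventually.of_forall fun y => ?_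
      exact ENNReal.Tendsto.const_mul ((hFc.tendsto _).comp (hlim y s))
        (Or.inr ENNReal.ofReal_ne_top)

lemma pow_bound {a r σ : ℝ} (hσ : 1 ≤ σ) (hr : σ ≤ r) (ha : 0 ≤ a) {u M : ℝ≥0∞} (hu : u ≤ M) :
    ENNReal.ofReal a * (2 * u ^ (1 / σ)) ^ r ≤
      ENNReal.ofReal (a * 2 ^ r) * (M ^ (r / σ - 1) * u) := by
  have hσ0 : 0 < σ := by linarith
  have h1 : 0 ≤ r / σ - 1 := by
    rw [sub_nonneg, le_div_iff₀ hσ0]; linarith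
  have h2 : (u ^ (1 / σ)) ^ r = u ^ (r / σ - 1) * u := by
    rw [← ENNReal.rpow_mul]
    conv_rhs => rw [← ENNReal.rpow_one u, ← ENNReal.rpow_mul, one_mul]
    rw [← ENNReal.rpow_add_of_nonneg _ _ h1 zero_le_one]
    congr 1
    ring
  rw [ENNReal.mul_rpow_of_nonneg _ _ (by linarith), h2, ENNReal.ofReal_mul ha,
    ← ENNReal.ofReal_rpow_of_pos two_pos, mul_assoc, ENNReal.ofReal_ofNat]
  gcongr

/-- Lemma 2.4 (ii)-(b): if `min{A,B} ≥ 1` and `1 ≤ σ ≤ min{A,B}`, there is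
`γ₂ > 0` such that the smallness condition
`sup_{0<t≤T} ‖S(t)w₀^σ‖_∞^{1-1/σ} ∫₀ᵗ (‖S(s)w₀^σ‖_∞^{A/σ-1} + ‖S(s)w₀^σ‖_∞^{B/σ-1}) ds ≤ γ₂`
implies the existence of a solution of (E) on `ℝ^N × (0,T]` with
`0 ≤ w ≤ 2 [S(t)w₀^σ]^{1/σ}`. -/
theorem statement6 (N : ℕ) (hN : 1 ≤ N) (α β A B σ : ℝ) (hα : 1 ≤ α) (hβ : 1 ≤ β)
    (hA : 0 ≤ A) (hB : 0 ≤ B) (hAB : 1 ≤ min A B) (hσ : 1 ≤ σ) (hσ' : σ ≤ min A B) :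
    ∃ γ₂ : ℝ, 0 < γ₂ ∧
      ∀ w₀ : Euc N → ℝ, Measurable w₀ → (∀ x, 0 ≤ w₀ x) →
        LocallyIntegrable (fun x => w₀ x ^ σ) volume →
        (∀ t : ℝ, 0 < t → heatSup N t (fun x => w₀ x ^ σ) < ⊤) →
        ∀ T : ℝ, 0 < T →
        (∀ t : ℝ, 0 < t → t ≤ T →
          heatSup N t (fun x => w₀ x ^ σ) ^ (1 - 1 / σ) *
            (∫⁻ s in Set.Ioo 0 t,
              (heatSup N s (fun x => w₀ x ^ σ) ^ (A / σ - 1) +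
                heatSup N s (fun x => w₀ x ^ σ) ^ (B / σ - 1))) ≤
              ENNReal.ofReal γ₂) →
        ∃ w : Euc N → ℝ → ℝ, (∀ x t, 0 ≤ w x t) ∧ Measurable (Function.uncurry w) ∧
          ∀ t : ℝ, 0 < t → t ≤ T →
            DuhamelScalar N α β A B w₀ w t ∧
            ∀ᵐ x ∂(volume : Measure (Euc N)), ENNReal.ofReal (w x t) ≤
              2 * heatS N t (fun y => w₀ y ^ σ) x ^ (1 / σ) := by
  have hσ0 : 0 < σ := by linarith
  have hσA : σ ≤ A := hσ'.trans (min_le_left _ _)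
  have hσB : σ ≤ B := hσ'.trans (min_le_right _ _)
  have hα0 : 0 ≤ α := by linarith
  have hβ0 : 0 ≤ β := by linarith
  set C : ℝ := α * 2 ^ A + β * 2 ^ B with hC
  have hCpos : 0 < C := by positivity
  refine ⟨1 / C, by positivity, ?_⟩
  intro w₀ hw₀ hw₀n _ hfin T hT hsmall
  set M : ℝ → ℝ≥0∞ := fun t => heatSup N t (fun x => w₀ x ^ σ) with hM
  set F : ℝ≥0∞ → ℝ≥0∞ := fun u => ENNReal.ofReal α * u ^ A + ENNReal.ofReal β * u ^ B with hF
  have hFm : Monotone F := by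
    intro u v huv
    simp only [hF]
    gcongr
  have hFc : Continuous F :=
    ((ENNReal.continuous_const_mul ENNReal.ofReal_ne_top).comp ENNReal.continuous_rpow_const).add
      ((ENNReal.continuous_const_mul ENNReal.ofReal_ne_top).comp ENNReal.continuous_rpow_const)
  set f : Euc N → ℝ≥0∞ := fun y => ENNReal.ofReal (w₀ y) with hf
  have hfm : Measurable f := hw₀.ennreal_ofReal
  set fσ : Euc N → ℝ≥0∞ := fun y => f y ^ σ with hfσ
  have hfσm : Measurable fσ := hfm.pow_const σ
  have hU : ∀ t, 0 < t → ∀ x, heatS N t (fun y => w₀ y ^ σ) x = hS N t fσ x := by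
    intro t ht x
    rw [heatS_eq N ht]
    congr 1
    funext y
    simp only [hfσ, hf]
    rw [ENNReal.ofReal_rpow_of_nonneg (hw₀n y) hσ0.le]
  have hUm : ∀ t, Measurable (hS N t fσ) := fun t =>
    (hS_meas_x N hfσm).comp (f := fun x => (x, t)) (by fun_prop)
  have hUM : ∀ t, 0 < t → ∀ᵐ x, hS N t fσ x ≤ M t := by
    intro t ht
    have := ENNReal.ae_le_essSup (heatS N t fun x => w₀ x ^ σ) (μ := volume)
    filter_upwards [this] with x hx
    rw [← hU t ht]
    exact hx
  have key : ∀ n, ∀ t, 0 < t → t ≤ T →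
      ∀ᵐ x, Wit N F f n x t ≤ 2 * hS N t fσ x ^ (1 / σ) := by
    intro n
    induction n with
    | zero => exact fun t _ _ => Eventually.of_forall fun x => zero_le
    | succ n ih =>
      intro t ht htT
      filter_upwards [hUM t ht] with x hx
      have hUfin : hS N t fσ x ≠ ⊤ := ne_top_of_le_ne_top (hfin t ht).ne hx
      have h1 : hS N t f x ≤ hS N t fσ x ^ (1 / σ) := hS_jensen N ht hσ hfm x
      have h2 : ∀ s ∈ Set.Ioo 0 t, hS N (t - s) (fun y => F (Wit N F f n y s)) x ≤
          (ENNReal.ofReal C * hS N t fσ x) * (M s ^ (A / σ - 1) + M s ^ (B / σ - 1)) := by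
        intro s hs
        have hle : (fun y => F (Wit N F f n y s)) ≤ᵐ[volume] fun y =>
            (ENNReal.ofReal C * (M s ^ (A / σ - 1) + M s ^ (B / σ - 1))) * hS N s fσ y := by
          filter_upwards [ih s hs.1 (hs.2.le.trans htT), hUM s hs.1] with y hy1 hy2
          refine (hFm hy1).trans ?_
          refine (add_le_add (pow_bound hσ hσA hα0 hy2) (pow_bound hσ hσB hβ0 hy2)).trans ?_
          rw [mul_add, add_mul, mul_assoc, mul_assoc]
          have ha : α * 2 ^ A ≤ C := by rw [hC]; linarith [show 0 ≤ β * 2 ^ B by positivity]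
          have hb : β * 2 ^ B ≤ C := by rw [hC]; linarith [show 0 ≤ α * 2 ^ A by positivity]
          exact add_le_add (mul_le_mul_left (ENNReal.ofReal_le_ofReal ha) _)
            (mul_le_mul_left (ENNReal.ofReal_le_ofReal hb) _)
        refine (hS_mono N hle x).trans ?_
        rw [hS_const N (hUm s), hS_semi N (sub_pos.2 hs.2) hs.1 hfσm, sub_add_cancel]
        exact le_of_eq (by ring)
      have h3 : (∫⁻ s in Set.Ioo 0 t, hS N (t - s) (fun y => F (Wit N F f n y s)) x) ≤
          hS N t fσ x ^ (1 / σ) := by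
        refine (setLIntegral_mono' measurableSet_Ioo h2).trans ?_
        rw [lintegral_const_mul' _ _ (ENNReal.mul_ne_top ENNReal.ofReal_ne_top hUfin)]
        have hexp : 0 ≤ 1 - 1 / σ := by
          rw [sub_nonneg, div_le_one hσ0]; exact hσ
        have hsplit : hS N t fσ x = hS N t fσ x ^ (1 / σ) * hS N t fσ x ^ (1 - 1 / σ) := by
          rw [← ENNReal.rpow_add_of_nonneg _ _ (by positivity) hexp]
          simp
        have hle : hS N t fσ x ≤ hS N t fσ x ^ (1 / σ) * M t ^ (1 - 1 / σ) := by
          conv_lhs => rw [hsplit]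
          gcongr
        have hs := hsmall t ht htT
        calc ENNReal.ofReal C * hS N t fσ x *
              ∫⁻ s in Set.Ioo 0 t, (M s ^ (A / σ - 1) + M s ^ (B / σ - 1))
            ≤ ENNReal.ofReal C * (hS N t fσ x ^ (1 / σ) * M t ^ (1 - 1 / σ)) *
              ∫⁻ s in Set.Ioo 0 t, (M s ^ (A / σ - 1) + M s ^ (B / σ - 1)) := by gcongr
          _ = (ENNReal.ofReal C * hS N t fσ x ^ (1 / σ)) * (M t ^ (1 - 1 / σ) *
              ∫⁻ s in Set.Ioo 0 t, (M s ^ (A / σ - 1) + M s ^ (B / σ - 1))) := by ring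
          _ ≤ (ENNReal.ofReal C * hS N t fσ x ^ (1 / σ)) * ENNReal.ofReal (1 / C) := by
              gcongr
          _ = (ENNReal.ofReal C * ENNReal.ofReal (1 / C)) * hS N t fσ x ^ (1 / σ) := by ring
          _ = hS N t fσ x ^ (1 / σ) := by
              rw [← ENNReal.ofReal_mul hCpos.le, mul_one_div_cancel hCpos.ne',
                ENNReal.ofReal_one, one_mul]
      rw [two_mul]
      exact add_le_add h1 h3
  have hlim : ∀ t, 0 < t → t ≤ T → ∀ᵐ x, Wlim N F f x t ≤ 2 * hS N t fσ x ^ (1 / σ) := by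
    intro t ht htT
    have := ae_all_iff.2 fun n => key n t ht htT
    filter_upwards [this] with x hx
    exact iSup_le hx
  have hlimfin : ∀ t, 0 < t → t ≤ T → ∀ᵐ x, Wlim N F f x t ≠ ⊤ := by
    intro t ht htT
    filter_upwards [hlim t ht htT, hUM t ht] with x hx hx2
    refine ne_top_of_le_ne_top (ENNReal.mul_ne_top ENNReal.ofNat_ne_top ?_) hx
    exact ENNReal.rpow_ne_top_of_nonneg (by positivity) (ne_top_of_le_ne_top (hfin t ht).ne hx2)
  refine ⟨fun x t => (Wlim N F f x t).toReal, fun x t => ENNReal.toReal_nonneg,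
    (Wlim_meas N hFc.measurable hfm).ennreal_toReal, fun t ht htT => ⟨?_, ?_⟩⟩
  · filter_upwards [hlimfin t ht htT] with x hx
    rw [ENNReal.ofReal_toReal hx, Wlim_eq N hFm hFc hfm, Pic, heatS_eq N ht]
    congr 1
    refine setLIntegral_congr_fun measurableSet_Ioo fun s hs => ?_
    beta_reduce
    rw [heatS_eq N (sub_pos.2 hs.2)]
    refine lintegral_congr_ae ?_
    filter_upwards [hlimfin s hs.1 (hs.2.le.trans htT)] with y hy
    congr 1
    rw [ENNReal.ofReal_add (by positivity) (by positivity), ENNReal.ofReal_mul hα0,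
      ENNReal.ofReal_mul hβ0, ← ENNReal.ofReal_rpow_of_nonneg ENNReal.toReal_nonneg hA,
      ← ENNReal.ofReal_rpow_of_nonneg ENNReal.toReal_nonneg hB, ENNReal.ofReal_toReal hy]
  · filter_upwards [hlim t ht htT] with x hx
    rw [hU t ht]
    exact ENNReal.ofReal_toReal_le.trans hx
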